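/- arXiv:math/9908014 — 3 statements merged into one kernel-verified Lean document; each statement's English description precedes it below -/
import Mathlib

section
/- For every real λ > 0, every real E, every integer n ≥ 1 and every finite sequence x_0, …, x_{n−1} of real numbers, letting A(t) denote the 2×2 real matrix [[E + λ·cos t, −1], [1, 0]] and ‖·‖ the operator norm on the Euclidean plane, one has (1/(2π)) · ∫_0^{2π} log ‖A(x_{n−1}+α) · A(x_{n−2}+α) ⋯ A(x_0+α)‖ dα ≥ n · log(λ/2). -/
open Real

/-- The one-step transfer matrix `[[E + λ·cos t, −1], [1, 0]]`. -/
noncomputable def transferMatrix (E lam t : ℝ) : Matrix (Fin 2) (Fin 2) ℝ :=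
  !![E + lam * Real.cos t, -1; 1, 0]

/-- The operator norm of a `2×2` real matrix acting on the Euclidean plane. -/
noncomputable def euclideanOpNorm (A : Matrix (Fin 2) (Fin 2) ℝ) : ℝ :=
  ‖LinearMap.toContinuousLinearMap (Matrix.toEuclideanLin A)‖

/-!
For a site with coupling `λ` and angle `t`, and with `z = exp (iα)`, the matrix `z A(t + α)` is a
polynomial in `z` whose value at `0` is `(λ / 2) exp (-it)` in the upper left corner and zero
elsewhere. Hence the upper left entry `p` of the product of these matrices over all sites has
`|p(0)|` equal to the product of the numbers `|λ| / 2`, while on the unit circle `|p(z)|` is at most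
the norm of the transfer product. As `log |p|` is subharmonic, `log |p(0)|` is at most the mean of
`log |p|` over the circle.
-/

section ConstantCoefficient

open Polynomial MeasureTheory

lemma log_norm_coeff_zero_le_logMahlerMeasure {p : ℂ[X]} (hp : p.coeff 0 ≠ 0) :
    log ‖p.coeff 0‖ ≤ p.logMahlerMeasure := by
  rw [logMahlerMeasure_eq_log_MahlerMeasure]
  exact log_le_log (norm_pos_iff.mpr hp) (by simpa using p.norm_coeff_le_choose_mul_mahlerMeasure 0)

lemma ae_eval_circleMap_ne_zero {p : ℂ[X]} (hp : p ≠ 0) (c : ℂ) {R : ℝ} (hR : R ≠ 0) :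
    ∀ᵐ α, p.eval (circleMap c R α) ≠ 0 := by
  have hcount : (circleMap c R ⁻¹' {z | p.IsRoot z}).Countable :=
    (finite_setOfPred_isRoot hp).countable.preimage_circleMap c hR
  exact hcount.ae_notMem volume

lemma log_norm_coeff_zero_le_average_log {p : ℂ[X]} (hp : p.coeff 0 ≠ 0) {f : ℝ → ℝ}
    (hf : IntervalIntegrable (fun α ↦ log (f α)) volume 0 (2 * π))
    (hpf : ∀ α, ‖p.eval (circleMap 0 1 α)‖ ≤ f α) :
    log ‖p.coeff 0‖ ≤ 1 / (2 * π) * ∫ α in (0)..(2 * π), log (f α) := by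
  have hp₀ : p ≠ 0 := by
    rintro rfl
    exact hp (coeff_zero 0)
  calc log ‖p.coeff 0‖
      ≤ p.logMahlerMeasure := log_norm_coeff_zero_le_logMahlerMeasure hp
    _ = 1 / (2 * π) * ∫ α in (0)..(2 * π), log ‖p.eval (circleMap 0 1 α)‖ := by
      rw [logMahlerMeasure_def, circleAverage_def, smul_eq_mul, one_div]
    _ ≤ 1 / (2 * π) * ∫ α in (0)..(2 * π), log (f α) := by
      gcongr
      refine intervalIntegral.integral_mono_ae two_pi_pos.le
        p.intervalIntegrable_mahlerMeasure hf ?_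
      filter_upwards [ae_eval_circleMap_ne_zero hp₀ 0 one_ne_zero] with α hα
      exact log_le_log (norm_pos_iff.mpr hα) (hpf α)

end ConstantCoefficient

section Matrices

lemma list_prod_apply_self {m R : Type*} [Fintype m] [DecidableEq m] [Semiring R] {i : m}
    {L : List (Matrix m m R)} (hL : ∀ A ∈ L, ∀ j ≠ i, A i j = 0) :
    L.prod i i = (L.map fun A ↦ A i i).prod := by
  induction L with
  | nil => simp
  | cons A L ih =>
    obtain ⟨hA, hL⟩ := List.forall_mem_cons.mp hL
    rw [List.prod_cons, Matrix.mul_apply, Finset.sum_eq_single i (fun j _ hj ↦ by simp [hA j hj])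
      (by simp), ih hL, List.map_cons, List.prod_cons]

open scoped Matrix.Norms.L2Operator

lemma norm_apply_le_l2_opNorm {m n 𝕜 : Type*} [Fintype m] [Fintype n] [DecidableEq n] [RCLike 𝕜]
    (A : Matrix m n 𝕜) (i : m) (j : n) : ‖A i j‖ ≤ ‖A‖ := by
  have hcol := (PiLp.norm_apply_le _ i).trans (A.l2_opNorm_mulVec (EuclideanSpace.single j 1))
  simpa using hcol

lemma euclideanOpNorm_eq_l2_opNorm (A : Matrix (Fin 2) (Fin 2) ℝ) : euclideanOpNorm A = ‖A‖ := rfl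

lemma abs_apply_le_euclideanOpNorm (A : Matrix (Fin 2) (Fin 2) ℝ) (i j : Fin 2) :
    |A i j| ≤ euclideanOpNorm A :=
  norm_apply_le_l2_opNorm A i j

lemma continuous_euclideanOpNorm : Continuous euclideanOpNorm :=
  continuous_norm

lemma euclideanOpNorm_ne_zero {A : Matrix (Fin 2) (Fin 2) ℝ} (hA : A ≠ 0) :
    euclideanOpNorm A ≠ 0 := by
  rwa [euclideanOpNorm_eq_l2_opNorm, norm_ne_zero_iff]

end Matrices

section TransferProduct

lemma continuous_transferMatrix (E lam : ℝ) : Continuous (transferMatrix E lam) := by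
  refine continuous_matrix fun i j ↦ ?_
  fin_cases i <;> fin_cases j <;> simp only [transferMatrix, Matrix.of_apply] <;> fun_prop

lemma det_transferMatrix (E lam t : ℝ) : (transferMatrix E lam t).det = 1 := by
  simp [transferMatrix, Matrix.det_fin_two]

variable {n : ℕ} (E lam x : Fin n → ℝ)

/-- The transfer product `A_{n-1}(x_{n-1} + α) ⋯ A_0(x_0 + α)` over `n` sites, where the energy
`E i` and the coupling `lam i` may depend on the site. -/
noncomputable def transferProduct (α : ℝ) : Matrix (Fin 2) (Fin 2) ℝ :=
  (List.ofFn fun i ↦ transferMatrix (E i) (lam i) (x i + α)).reverse.prod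

lemma continuous_transferProduct : Continuous (transferProduct E lam x) := by
  unfold transferProduct
  simp only [List.ofFn_eq_map, ← List.map_reverse]
  exact continuous_list_prod _ fun i _ ↦
    (continuous_transferMatrix (E i) (lam i)).comp (continuous_const_add (x i))

lemma det_transferProduct (α : ℝ) : (transferProduct E lam x α).det = 1 := by
  rw [transferProduct, ← Matrix.coe_detMonoidHom, map_list_prod, List.map_reverse]
  simp [List.map_ofFn, Function.comp_def, det_transferMatrix]

lemma intervalIntegrable_log_euclideanOpNorm_transferProduct (a b : ℝ) :
    IntervalIntegrable (fun α ↦ log (euclideanOpNorm (transferProduct E lam x α)))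
      MeasureTheory.volume a b := by
  have hne (α : ℝ) : transferProduct E lam x α ≠ 0 := fun h ↦ by
    simpa [h] using det_transferProduct E lam x α
  have hcont : Continuous fun α ↦ euclideanOpNorm (transferProduct E lam x α) :=
    continuous_euclideanOpNorm.comp (continuous_transferProduct E lam x)
  exact (hcont.log fun α ↦ euclideanOpNorm_ne_zero (hne α)).intervalIntegrable a b

end TransferProduct

section Complexification

open Polynomial Complex

/-- The polynomial matrix in `z` that equals `z A(t + α)` at `z = exp (iα)`; the factor `z` clears
the pole at `0` of `cos (t + α) = (exp (it) z + exp (-it) z⁻¹) / 2`. -/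
noncomputable def polyTransferMatrix (E lam t : ℝ) : Matrix (Fin 2) (Fin 2) ℂ[X] :=
  !![C (lam / 2 * exp (-t * I)) + C (E : ℂ) * X + C (lam / 2 * exp (t * I)) * X ^ 2, -X; X, 0]

lemma mapMatrix_eval_polyTransferMatrix (E lam t α : ℝ) :
    (evalRingHom (circleMap 0 1 α)).mapMatrix (polyTransferMatrix E lam t) =
      circleMap 0 1 α • ofRealHom.mapMatrix (transferMatrix E lam (t + α)) := by
  have h_neg : exp (-(t * I)) = exp (α * I) * exp (-(t + α) * I) := by
    rw [← Complex.exp_add]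
    ring_nf
  have h_pos : exp ((t + α) * I) = exp (t * I) * exp (α * I) := by
    rw [← Complex.exp_add]
    ring_nf
  have h_corner : lam / 2 * exp (-(t * I)) + E * exp (α * I) +
      lam / 2 * exp (t * I) * exp (α * I) ^ 2 = exp (α * I) * (E + lam * Complex.cos (t + α)) := by
    rw [Complex.cos, h_pos, h_neg]
    ring
  ext i j
  fin_cases i <;> fin_cases j <;>
    simp [polyTransferMatrix, transferMatrix, circleMap_zero, h_corner]

variable {n : ℕ} (E lam x : Fin n → ℝ)

/-- The product of the polynomial matrices `polyTransferMatrix`, in the order of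
`transferProduct`. -/
noncomputable def polyTransferProduct : Matrix (Fin 2) (Fin 2) ℂ[X] :=
  (List.ofFn fun i ↦ polyTransferMatrix (E i) (lam i) (x i)).reverse.prod

lemma mapMatrix_eval_polyTransferProduct (α : ℝ) :
    (evalRingHom (circleMap 0 1 α)).mapMatrix (polyTransferProduct E lam x) =
      circleMap 0 1 α ^ n • ofRealHom.mapMatrix (transferProduct E lam x α) := by
  have hsmul := List.smul_prod
    (List.ofFn fun i ↦ ofRealHom.mapMatrix (transferMatrix (E i) (lam i) (x i + α))).reverse
    (circleMap 0 1 α)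
  simp only [List.length_reverse, List.length_ofFn, List.map_reverse, List.map_ofFn,
    Function.comp_def] at hsmul
  simp only [polyTransferProduct, transferProduct, map_list_prod, List.map_reverse, List.map_ofFn,
    Function.comp_def, mapMatrix_eval_polyTransferMatrix, hsmul]

lemma norm_eval_polyTransferProduct_apply (α : ℝ) (i j : Fin 2) :
    ‖(polyTransferProduct E lam x i j).eval (circleMap 0 1 α)‖ =
      |transferProduct E lam x α i j| := by
  have h := congr_fun₂ (mapMatrix_eval_polyTransferProduct E lam x α) i j
  simp only [RingHom.mapMatrix_apply, Matrix.map_apply, Matrix.smul_apply, coe_evalRingHom] at h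
  simp [h]

lemma norm_coeff_zero_polyTransferProduct :
    ‖(polyTransferProduct E lam x 0 0).coeff 0‖ = ∏ i, |lam i| / 2 := by
  have hprod : (polyTransferProduct E lam x 0 0).coeff 0 =
      ∏ i, (lam i / 2 * exp (-x i * I) : ℂ) := by
    change constantCoeff.mapMatrix (polyTransferProduct E lam x) 0 0 = _
    rw [polyTransferProduct, map_list_prod, list_prod_apply_self]
    · simp [polyTransferMatrix, List.map_reverse, List.map_ofFn, Function.comp_def,
        List.prod_reverse, List.prod_ofFn]
    · simp [polyTransferMatrix, List.mem_ofFn]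
  rw [hprod, norm_prod]
  refine Finset.prod_congr rfl fun i _ ↦ ?_
  rw [norm_mul, ← ofReal_neg, norm_exp_ofReal_mul_I]
  simp

end Complexification

theorem herman_subharmonicity_estimate_general {n : ℕ} (E lam x : Fin n → ℝ)
    (hlam : ∀ i, lam i ≠ 0) :
    ∑ i, log (|lam i| / 2) ≤
      1 / (2 * π) * ∫ α in (0)..(2 * π), log (euclideanOpNorm (transferProduct E lam x α)) := by
  set p := polyTransferProduct E lam x 0 0
  have hcoeff : ‖p.coeff 0‖ = ∏ i, |lam i| / 2 := norm_coeff_zero_polyTransferProduct E lam x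
  have hfactor (i : Fin n) : |lam i| / 2 ≠ 0 := by simpa using hlam i
  have hp : p.coeff 0 ≠ 0 := by
    rw [← norm_ne_zero_iff, hcoeff]
    exact Finset.prod_ne_zero_iff.mpr fun i _ ↦ hfactor i
  rw [← log_prod fun i _ ↦ hfactor i, ← hcoeff]
  refine log_norm_coeff_zero_le_average_log hp
    (intervalIntegrable_log_euclideanOpNorm_transferProduct E lam x _ _) fun α ↦ ?_
  rw [norm_eval_polyTransferProduct_apply]
  exact abs_apply_le_euclideanOpNorm _ 0 0

/-- Herman's subharmonicity estimate: for `λ > 0`, any real `E`, any `n ≥ 1` and any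
sequence of angles `x_0, …, x_{n−1}`, the average over the rotation parameter `α` of
`log ‖A(x_{n−1}+α) ⋯ A(x_0+α)‖` is at least `n · log(λ/2)`. -/
theorem herman_subharmonicity_estimate (lam E : ℝ) (hlam : 0 < lam)
    (n : ℕ) (hn : 1 ≤ n) (x : Fin n → ℝ) :
    (1 / (2 * π)) *
        (∫ α in (0:ℝ)..(2 * π),
          Real.log (euclideanOpNorm
            ((List.ofFn (fun i : Fin n => transferMatrix E lam (x i + α))).reverse.prod)))
      ≥ (n : ℝ) * Real.log (lam / 2) := by
  simpa [transferProduct, abs_of_pos hlam] using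
    herman_subharmonicity_estimate_general (fun _ ↦ E) (fun _ ↦ lam) x fun _ ↦ hlam.ne'
end

section
/- Lax approximation by cyclic cube exchange transformations (two-dimensional case): let T be a homeomorphism of the torus 𝕋² = (ℝ/ℤ) × (ℝ/ℤ) which preserves the Haar (Lebesgue) probability measure. Then for every ε > 0 there exist a positive integer n and a permutation σ of the index set {0,…,n−1} × {0,…,n−1} which is a single cycle on the whole index set (a cyclic permutation of all n² indices), such that for every point x of the torus and every index k = (k₁,k₂): if x has a representative (t₁,t₂) with t_i ∈ [k_i/n, (k_i+1)/n) for i = 1,2, then dist( T(x), x + ((σ(k)₁ − k₁)/n, (σ(k)₂ − k₂)/n) ) ≤ ε, where dist is the sup-distance on 𝕋² induced by the geodesic distance on each circle factor and the additive shift is taken in the torus. -/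
open MeasureTheory

/-!
Cut the torus into `n²` square cells. Since `T` preserves measure, the image of a union of `m` cells
meets at least `m` cells, so Hall's marriage theorem yields a permutation `s` such that the image of
cell `k` meets cell `s k` for every `k`; by uniform continuity, the exchange along `s` is close to
`T`. To make it cyclic, number the cells along the closed spiral `t ↦ (t / n², t / n)`, so that
nearby numbers belong to nearby cells. Composing a permutation with the transposition of two points
of different cycles merges these cycles. Merging inside the blocks `{2i, 2i + 1}`, and then inside
the blocks `{2i - 1, 2i}`, leaves a single cycle and changes the number of each target cell by at
most `2`.
-/

section Permutations

open Equiv Equiv.Perm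

variable {X : Type*}

theorem sameCycle_of_forall_sameCycle_apply {g h : Perm X} (hgh : ∀ x, h.SameCycle x (g x))
    {x y : X} (hxy : g.SameCycle x y) : h.SameCycle x y := by
  obtain ⟨i, rfl⟩ := hxy
  induction i using Int.induction_on with
  | zero => exact SameCycle.refl h x
  | succ i ih => rw [add_comm, zpow_one_add]; exact ih.trans (hgh _)
  | pred i ih =>
    have hstep := hgh ((g ^ (-(i : ℤ) - 1)) x)
    rw [← Perm.mul_apply, ← zpow_one_add, add_sub_cancel] at hstep
    exact ih.trans hstep.symm

section Merging

variable [Finite X] [DecidableEq X] {g : Perm X} {a b : X}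

theorem sameCycle_swap_mul_of_not_sameCycle (hab : ¬ g.SameCycle a b) :
    (swap a b * g).SameCycle a b := by
  by_contra hnot
  have step (i : ℕ) (hi : ((swap a b * g) ^ i) a = (g ^ i) a) :
      (g ^ (i + 1)) a ≠ a ∧ ((swap a b * g) ^ (i + 1)) a = (g ^ (i + 1)) a := by
    have happly : ((swap a b * g) ^ (i + 1)) a = swap a b ((g ^ (i + 1)) a) := by
      simp only [pow_succ', Perm.mul_apply, hi]
    have hne_b : (g ^ (i + 1)) a ≠ b := fun h => hab ⟨(i + 1 : ℕ), by rwa [zpow_natCast]⟩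
    have hne_a : (g ^ (i + 1)) a ≠ a := fun h =>
      hnot ⟨(i + 1 : ℕ), by rw [zpow_natCast, happly, h, swap_apply_left]⟩
    exact ⟨hne_a, happly.trans (swap_apply_of_ne_of_ne hne_a hne_b)⟩
  have orbits_agree (i : ℕ) : ((swap a b * g) ^ i) a = (g ^ i) a := by
    induction i with
    | zero => rfl
    | succ i ih => exact (step i ih).2
  obtain ⟨i, hi, hpow⟩ := (isOfFinOrder_of_finite g).exists_pow_eq_one
  obtain ⟨i, rfl⟩ := Nat.exists_eq_add_one.2 hi
  exact (step i (orbits_agree i)).1 (by rw [hpow, Perm.one_apply])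

theorem sameCycle_swap_mul_mono (hab : ¬ g.SameCycle a b) {x y : X} (hxy : g.SameCycle x y) :
    (swap a b * g).SameCycle x y := by
  have hmerge := sameCycle_swap_mul_of_not_sameCycle hab
  refine sameCycle_of_forall_sameCycle_apply (fun z => ?_) hxy
  have hstep : (swap a b * g).SameCycle z (swap a b (g z)) :=
    sameCycle_apply_right.2 (SameCycle.refl _ z)
  rcases eq_or_ne (g z) a with ha | ha
  · rw [ha, swap_apply_left] at hstep
    exact ha ▸ hstep.trans hmerge.symm
  rcases eq_or_ne (g z) b with hb | hb
  · rw [hb, swap_apply_right] at hstep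
    exact hb ▸ hstep.trans hmerge
  rwa [swap_apply_of_ne_of_ne ha hb] at hstep

end Merging

theorem exists_perm_sameCycle_of_apply_eq [Finite X] {β : Type*} (p : X → β) (s : Perm X) :
    ∃ r : Perm X, (∀ x, p (r x) = p (s x)) ∧ (∀ x y, p x = p y → r.SameCycle x y) ∧
      ∀ x y, s.SameCycle x y → r.SameCycle x y := by
  classical
  have := Fintype.ofFinite X
  suffices join_pairs : ∀ S : Finset (X × X), ∃ r : Perm X, (∀ x, p (r x) = p (s x)) ∧
      (∀ q ∈ S, p q.1 = p q.2 → r.SameCycle q.1 q.2) ∧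
      ∀ x y, s.SameCycle x y → r.SameCycle x y by
    obtain ⟨r, hp, hjoin, hmono⟩ := join_pairs Finset.univ
    exact ⟨r, hp, fun x y => hjoin (x, y) (Finset.mem_univ _), hmono⟩
  intro S
  induction S using Finset.induction_on with
  | empty => exact ⟨s, fun _ => rfl, by simp, fun _ _ => id⟩
  | insert ab S _ ih =>
    obtain ⟨a, b⟩ := ab
    obtain ⟨r, hp, hjoin, hmono⟩ := ih
    by_cases hab : p a = p b ∧ ¬ r.SameCycle a b
    · refine ⟨swap a b * r, fun x => ?_, ?_,
        fun x y hxy => sameCycle_swap_mul_mono hab.2 (hmono x y hxy)⟩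
      · rw [← hp x, Perm.mul_apply, swap_apply_def]
        split_ifs with ha hb
        · rw [ha, hab.1]
        · rw [hb, hab.1]
        · rfl
      · rintro q hq hpq
        rcases Finset.mem_insert.1 hq with rfl | hq
        · exact sameCycle_swap_mul_of_not_sameCycle hab.2
        · exact sameCycle_swap_mul_mono hab.2 (hjoin q hq hpq)
    · refine ⟨r, hp, fun q hq hpq => ?_, hmono⟩
      rcases Finset.mem_insert.1 hq with rfl | hq
      · exact not_not.1 (not_and.1 hab hpq)
      · exact hjoin q hq hpq

theorem exists_cyclic_perm_dist_le_two {N : ℕ} (e : X ≃ Fin N) (s : Perm X) :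
    ∃ r : Perm X, (∀ x y, r.SameCycle x y) ∧ ∀ x, dist (e (r x) : ℕ) (e (s x)) ≤ 2 := by
  have : Finite X := Finite.of_equiv _ e.symm
  obtain ⟨t, ht_near, ht_join, -⟩ :=
    exists_perm_sameCycle_of_apply_eq (fun x => (e x : ℕ) / 2) s
  obtain ⟨r, hr_near, hr_join, hr_mono⟩ :=
    exists_perm_sameCycle_of_apply_eq (fun x => ((e x : ℕ) + 1) / 2) t
  refine ⟨r, ?_, fun x => ?_⟩
  · have succ_join (i : ℕ) (hi : i + 1 < N) :
        r.SameCycle (e.symm ⟨i, by omega⟩) (e.symm ⟨i + 1, hi⟩) := by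
      rcases Nat.even_or_odd' i with ⟨j, rfl | rfl⟩
      · exact hr_mono _ _ (ht_join _ _ (by simp only [apply_symm_apply]; omega))
      · exact hr_join _ _ (by simp only [apply_symm_apply]; omega)
    have zero_join (i : ℕ) (hi : i < N) :
        r.SameCycle (e.symm ⟨0, by omega⟩) (e.symm ⟨i, hi⟩) := by
      induction i with
      | zero => exact SameCycle.refl r _
      | succ i ih => exact (ih (by omega)).trans (succ_join i hi)
    intro x y
    simpa using (zero_join (e x) (e x).2).symm.trans (zero_join (e y) (e y).2)
  · have hts := ht_near x
    have hrt := hr_near x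
    have habs : |((e (r x) : ℕ) : ℤ) - (e (s x) : ℕ)| ≤ 2 := by
      rw [abs_le]
      omega
    rw [Nat.dist_eq]
    exact_mod_cast habs

end Permutations

theorem exists_injective_fiber_matching_of_measurePreserving {X Y ι κ : Type*}
    [MeasurableSpace X] [MeasurableSpace Y] [MeasurableSpace ι] [MeasurableSingletonClass ι]
    [Finite κ] [MeasurableSpace κ] [MeasurableSingletonClass κ]
    {μ : Measure X} {ν : Measure Y} {T : X → Y}
    (hT : MeasurePreserving T μ ν) {p : X → ι} {q : Y → κ} (hp : Measurable p) (hq : Measurable q)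
    {c : ENNReal} (hc₀ : c ≠ 0) (hc : c ≠ ⊤) (hpc : ∀ i, c ≤ μ (p ⁻¹' {i}))
    (hqc : ∀ j, ν (q ⁻¹' {j}) ≤ c) :
    ∃ f : ι → κ, Function.Injective f ∧ ∀ i, ∃ x, p x = i ∧ q (T x) = f i := by
  classical
  have := Fintype.ofFinite κ
  refine (Fintype.all_card_le_filter_rel_iff_exists_injective
    fun i j => ∃ x, p x = i ∧ q (T x) = j).1 fun A => ?_
  set B : Finset κ := {j | ∃ i ∈ A, ∃ x, p x = i ∧ q (T x) = j}
  have hsub : p ⁻¹' A ⊆ T ⁻¹' (q ⁻¹' B) := fun x hx => by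
    simpa [B] using ⟨x, hx, rfl⟩
  have hmass : A.card * c ≤ B.card * c :=
    calc A.card * c ≤ ∑ i ∈ A, μ (p ⁻¹' {i}) := by
          simpa using Finset.card_nsmul_le_sum A _ c fun i _ => hpc i
      _ = μ (p ⁻¹' A) := sum_measure_preimage_singleton A fun i _ => hp (measurableSet_singleton i)
      _ ≤ μ (T ⁻¹' (q ⁻¹' B)) := measure_mono hsub
      _ = ν (q ⁻¹' B) := hT.measure_preimage (hq B.measurableSet).nullMeasurableSet
      _ = ∑ j ∈ B, ν (q ⁻¹' {j}) :=
          (sum_measure_preimage_singleton B fun j _ => hq (measurableSet_singleton j)).symm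
      _ ≤ B.card * c := by simpa using Finset.sum_le_card_nsmul B _ c fun j _ => hqc j
  exact_mod_cast (ENNReal.mul_le_mul_iff_left hc₀ hc).1 hmass

theorem dist_quotientMk_le_dist {M : Type*} [SeminormedAddCommGroup M] {S : AddSubgroup M}
    (x y : M) : dist (x : M ⧸ S) y ≤ dist x y := by
  rw [dist_eq_norm, dist_eq_norm, ← QuotientAddGroup.mk_sub]
  exact QuotientAddGroup.norm_mk_le_norm

noncomputable section CubeExchange

/-- The two-dimensional torus, with the sup distance of its two circle factors. -/
abbrev Torus : Type := UnitAddCircle × UnitAddCircle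

/-- The index `a` of the arc `[a / n, (a + 1) / n)` of the circle that contains `x`. -/
def arcIndex (n : ℕ) [NeZero n] (x : UnitAddCircle) : Fin n :=
  ⟨⌊n * (AddCircle.equivIco 1 0 x : ℝ)⌋₊, by
    have hn : (0 : ℝ) < n := Nat.cast_pos.2 (NeZero.pos n)
    obtain ⟨t, ht₀, ht₁⟩ := AddCircle.equivIco (1 : ℝ) 0 x
    rw [Nat.floor_lt (by positivity)]
    simpa using mul_lt_mul_of_pos_left ht₁ hn⟩

/-- The index `k` of the square `[k₁ / n, (k₁ + 1) / n) × [k₂ / n, (k₂ + 1) / n)` that contains `x`;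
the cells of side `1 / n` are the fibres of this map. -/
def cellIndex (n : ℕ) [NeZero n] (x : Torus) : Fin n × Fin n :=
  (arcIndex n x.1, arcIndex n x.2)

/-- The cube exchange transformation `T_σ`, translating the cell with index `k` onto the cell with
index `σ k`. -/
def cubeExchange {n : ℕ} [NeZero n] (σ : Equiv.Perm (Fin n × Fin n)) (x : Torus) : Torus :=
  let k := cellIndex n x
  x + ((((((σ k).1 : ℝ) - k.1) / n : ℝ) : UnitAddCircle),
    (((((σ k).2 : ℝ) - k.2) / n : ℝ) : UnitAddCircle))

variable {n : ℕ} [NeZero n]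

theorem arcIndex_coe_eq_iff {a : Fin n} {t : ℝ} (ht : t ∈ Set.Ico (0 : ℝ) 1) :
    arcIndex n t = a ↔ t ∈ Set.Ico ((a : ℝ) / n) ((a + 1) / n) := by
  have hn : (0 : ℝ) < n := Nat.cast_pos.2 (NeZero.pos n)
  have ht' : t ∈ Set.Ico (0 : ℝ) (0 + 1) := by simpa using ht
  simp only [arcIndex, AddCircle.equivIco_coe_eq ht', Fin.ext_iff]
  rw [Nat.floor_eq_iff (mul_nonneg hn.le ht.1), Set.mem_Ico, div_le_iff₀' hn, lt_div_iff₀' hn]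

theorem Ico_div_subset_Ico_zero_one (a : Fin n) :
    Set.Ico ((a : ℝ) / n) ((a + 1) / n) ⊆ Set.Ico (0 : ℝ) 1 := by
  have hn : (0 : ℝ) < n := Nat.cast_pos.2 (NeZero.pos n)
  refine Set.Ico_subset_Ico (by positivity) ((div_le_one hn).2 ?_)
  exact_mod_cast a.2

theorem arcIndex_coe {a : Fin n} {t : ℝ} (ht : t ∈ Set.Ico ((a : ℝ) / n) ((a + 1) / n)) :
    arcIndex n t = a :=
  (arcIndex_coe_eq_iff (Ico_div_subset_Ico_zero_one a ht)).2 ht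

theorem exists_mem_Ico_arcIndex_coe_eq (n : ℕ) [NeZero n] (x : UnitAddCircle) :
    ∃ t ∈ Set.Ico ((arcIndex n x : ℝ) / n) ((arcIndex n x + 1) / n), (t : UnitAddCircle) = x := by
  obtain ⟨t, ht, rfl⟩ := (AddCircle.coe_image_Ico_eq (1 : ℝ) 0).ge (Set.mem_univ x)
  exact ⟨t, (arcIndex_coe_eq_iff (by simpa using ht)).1 rfl, rfl⟩

theorem arcIndex_add_coe {a : Fin n} (x : UnitAddCircle) :
    arcIndex n (x + (((a : ℝ) - arcIndex n x) / n : ℝ)) = a := by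
  obtain ⟨t, ht, htx⟩ := exists_mem_Ico_arcIndex_coe_eq n x
  nth_rewrite 1 [← htx]
  rw [← AddCircle.coe_add]
  refine arcIndex_coe ?_
  rw [Set.mem_Ico, add_div] at ht ⊢
  rw [sub_div]
  constructor <;> linarith [ht.1, ht.2]

theorem measurable_arcIndex : Measurable (arcIndex n) := by
  have hfloor : Measurable fun x => ⌊n * (AddCircle.equivIco (1 : ℝ) 0 x : ℝ)⌋₊ :=
    Nat.measurable_floor.comp <|
      (measurable_subtype_coe.comp (AddCircle.measurableEquivIco 1 0).measurable).const_mul _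
  exact measurable_to_countable' fun a => by
    simpa only [arcIndex, Set.preimage, Set.mem_singleton_iff, Fin.ext_iff] using
      hfloor (measurableSet_singleton (a : ℕ))

theorem volume_arcIndex_fiber (a : Fin n) : volume (arcIndex n ⁻¹' {a}) = (n : ENNReal)⁻¹ := by
  have hn : (0 : ℝ) < n := Nat.cast_pos.2 (NeZero.pos n)
  have hlift : (QuotientAddGroup.mk ⁻¹' (arcIndex n ⁻¹' {a}) ∩ Set.Ico (0 : ℝ) 1 : Set ℝ) =
      Set.Ico ((a : ℝ) / n) ((a + 1) / n) := by
    ext t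
    exact ⟨fun ht => (arcIndex_coe_eq_iff ht.2).1 ht.1,
      fun ht => ⟨arcIndex_coe ht, Ico_div_subset_Ico_zero_one a ht⟩⟩
  have hIco_Ioc : (Set.Ioc (0 : ℝ) (0 + 1) : Set ℝ) =ᵐ[volume] Set.Ico (0 : ℝ) 1 := by
    rw [zero_add]; exact Ico_ae_eq_Ioc.symm
  rw [AddCircle.add_projection_respects_measure 1 0
      (measurable_arcIndex (measurableSet_singleton a)),
    measure_congr ((ae_eq_refl _).inter hIco_Ioc), hlift, Real.volume_Ico, ← sub_div,
    add_sub_cancel_left, one_div, ENNReal.ofReal_inv_of_pos hn, ENNReal.ofReal_natCast]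

theorem measurable_cellIndex : Measurable (cellIndex n) :=
  (measurable_arcIndex.comp measurable_fst).prodMk (measurable_arcIndex.comp measurable_snd)

theorem volume_cellIndex_fiber (k : Fin n × Fin n) :
    volume (cellIndex n ⁻¹' {k}) = (n : ENNReal)⁻¹ * (n : ENNReal)⁻¹ := by
  have hprod : cellIndex n ⁻¹' {k} = (arcIndex n ⁻¹' {k.1}) ×ˢ (arcIndex n ⁻¹' {k.2}) := by
    ext x
    simp [cellIndex, Prod.ext_iff]
  rw [hprod, Measure.volume_eq_prod, Measure.prod_prod, volume_arcIndex_fiber,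
    volume_arcIndex_fiber]

theorem cellIndex_cubeExchange (σ : Equiv.Perm (Fin n × Fin n)) (x : Torus) :
    cellIndex n (cubeExchange σ x) = σ (cellIndex n x) :=
  Prod.ext (arcIndex_add_coe x.1) (arcIndex_add_coe x.2)

theorem cubeExchange_coe (σ : Equiv.Perm (Fin n × Fin n)) {k : Fin n × Fin n} {t₁ t₂ : ℝ}
    (h₁ : t₁ ∈ Set.Ico ((k.1 : ℝ) / n) ((k.1 + 1) / n))
    (h₂ : t₂ ∈ Set.Ico ((k.2 : ℝ) / n) ((k.2 + 1) / n)) :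
    cubeExchange σ ((t₁ : UnitAddCircle), (t₂ : UnitAddCircle)) =
      ((t₁ : UnitAddCircle), (t₂ : UnitAddCircle)) +
        ((((((σ k).1 : ℝ) - k.1) / n : ℝ) : UnitAddCircle),
          (((((σ k).2 : ℝ) - k.2) / n : ℝ) : UnitAddCircle)) := by
  simp only [cubeExchange, cellIndex, arcIndex_coe h₁, arcIndex_coe h₂]

theorem dist_le_of_arcIndex_eq {x y : UnitAddCircle} (hxy : arcIndex n x = arcIndex n y) :
    dist x y ≤ 1 / n := by
  obtain ⟨s, hs, rfl⟩ := exists_mem_Ico_arcIndex_coe_eq n x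
  obtain ⟨t, ht, rfl⟩ := exists_mem_Ico_arcIndex_coe_eq n y
  rw [hxy] at hs
  have hst := Real.dist_le_of_mem_Icc (Set.Ico_subset_Icc_self hs) (Set.Ico_subset_Icc_self ht)
  rw [← sub_div, add_sub_cancel_left] at hst
  exact (dist_quotientMk_le_dist s t).trans hst

theorem dist_le_of_cellIndex_eq {x y : Torus} (hxy : cellIndex n x = cellIndex n y) :
    dist x y ≤ 1 / n :=
  max_le (dist_le_of_arcIndex_eq (congrArg Prod.fst hxy))
    (dist_le_of_arcIndex_eq (congrArg Prod.snd hxy))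

/-- The closed geodesic `s ↦ (s / n², s / n)` of slope `n`. For natural numbers `s < n²` it visits
each cell exactly once, in the order given by `finProdFinEquiv`. -/
def spiral (n : ℕ) (s : ℝ) : Torus :=
  (((s / n ^ 2 : ℝ) : UnitAddCircle), ((s / n : ℝ) : UnitAddCircle))

theorem dist_spiral_le (n : ℕ) [NeZero n] (s t : ℝ) :
    dist (spiral n s) (spiral n t) ≤ dist s t / n := by
  have hn : (0 : ℝ) < n := Nat.cast_pos.2 (NeZero.pos n)
  have hn_sq : (n : ℝ) ≤ n ^ 2 := le_self_pow₀ (Nat.one_le_cast.2 NeZero.one_le) two_ne_zero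
  have hscale {c : ℝ} (hc : (n : ℝ) ≤ c) :
      dist ((s / c : ℝ) : UnitAddCircle) ((t / c : ℝ) : UnitAddCircle) ≤ dist s t / n :=
    calc dist ((s / c : ℝ) : UnitAddCircle) ((t / c : ℝ) : UnitAddCircle)
        ≤ dist (s / c) (t / c) := dist_quotientMk_le_dist _ _
      _ = dist s t / c := by
          rw [Real.dist_eq, ← sub_div, abs_div, abs_of_pos (hn.trans_le hc), Real.dist_eq]
      _ ≤ dist s t / n := by gcongr
  exact max_le (hscale hn_sq) (hscale le_rfl)

theorem cellIndex_spiral (k : Fin n × Fin n) :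
    cellIndex n (spiral n (finProdFinEquiv k : ℕ)) = k := by
  have hn : (0 : ℝ) < n := Nat.cast_pos.2 (NeZero.pos n)
  have hk : ((k.2 : ℕ) : ℝ) < n := Nat.cast_lt.2 k.2.2
  have hval : ((finProdFinEquiv k : ℕ) : ℝ) = k.2 + n * k.1 := by
    rw [finProdFinEquiv_apply_val]; push_cast; rfl
  refine Prod.ext (arcIndex_coe ?_) ?_
  · rw [Set.mem_Ico, div_le_div_iff₀ hn (by positivity), div_lt_div_iff₀ (by positivity) hn, hval]
    constructor <;> nlinarith
  · have hwrap : ((finProdFinEquiv k : ℕ) : ℝ) / n = k.2 / n + (k.1 : ℕ) • (1 : ℝ) := by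
      rw [hval, nsmul_one]; field_simp
    have hcoe : (spiral n (finProdFinEquiv k : ℕ)).2 = ((k.2 / n : ℝ) : UnitAddCircle) := by
      rw [spiral, hwrap, AddCircle.coe_add, AddCircle.coe_nsmul, AddCircle.coe_period, smul_zero,
        add_zero]
    rw [cellIndex, hcoe]
    exact arcIndex_coe ⟨le_rfl, by gcongr; linarith⟩

theorem dist_le_dist_finProdFinEquiv_cellIndex (x y : Torus) :
    dist x y ≤ (dist (finProdFinEquiv (cellIndex n x) : ℕ) (finProdFinEquiv (cellIndex n y)) + 2)
      / n := by
  let i : ℕ := finProdFinEquiv (cellIndex n x)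
  let j : ℕ := finProdFinEquiv (cellIndex n y)
  calc dist x y ≤ dist x (spiral n i) + dist (spiral n i) (spiral n j) + dist (spiral n j) y :=
        dist_triangle4 _ _ _ _
    _ ≤ 1 / n + dist i j / n + 1 / n := by
        gcongr
        · exact dist_le_of_cellIndex_eq (cellIndex_spiral _).symm
        · exact dist_spiral_le n i j
        · exact dist_le_of_cellIndex_eq (cellIndex_spiral _)
    _ = (dist i j + 2) / n := by ring

theorem exists_perm_cellIndex_eq {T : Torus → Torus} (hT : MeasurePreserving T volume volume)
    (n : ℕ) [NeZero n] :
    ∃ s : Equiv.Perm (Fin n × Fin n), ∀ k, ∃ y, cellIndex n y = k ∧ cellIndex n (T y) = s k := by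
  have hn : (n : ENNReal)⁻¹ ≠ ⊤ := ENNReal.inv_ne_top.2 (NeZero.ne _)
  have hn₀ : (n : ENNReal)⁻¹ ≠ 0 := ENNReal.inv_ne_zero.2 (ENNReal.natCast_ne_top n)
  obtain ⟨f, hf, hfT⟩ := exists_injective_fiber_matching_of_measurePreserving hT
    measurable_cellIndex measurable_cellIndex (mul_ne_zero hn₀ hn₀) (ENNReal.mul_ne_top hn hn)
    (fun k => (volume_cellIndex_fiber k).ge) (fun k => (volume_cellIndex_fiber k).le)
  exact ⟨Equiv.ofBijective f (Finite.injective_iff_bijective.1 hf), hfT⟩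

theorem lax_approximation_cyclic_cube_exchange_general {T : Torus → Torus} (hT : Continuous T)
    (hTvol : MeasurePreserving T volume volume) {ε : ℝ} (hε : 0 < ε) :
    ∃ n : ℕ, ∃ _ : NeZero n, ∃ σ : Equiv.Perm (Fin n × Fin n),
      (∀ k k', σ.SameCycle k k') ∧ ∀ x, dist (T x) (cubeExchange σ x) ≤ ε := by
  obtain ⟨δ, hδ, hTδ⟩ := Metric.uniformContinuous_iff.1
    (CompactSpace.uniformContinuous_of_continuous hT) (ε / 2) (half_pos hε)
  obtain ⟨m, hm⟩ := exists_nat_one_div_lt (show 0 < min δ (ε / 8) by positivity)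
  rw [← Nat.cast_succ, lt_min_iff] at hm
  obtain ⟨s, hs⟩ := exists_perm_cellIndex_eq hTvol (m + 1)
  obtain ⟨σ, hσ, hσs⟩ := exists_cyclic_perm_dist_le_two finProdFinEquiv s
  refine ⟨m + 1, inferInstance, σ, hσ, fun x => ?_⟩
  obtain ⟨y, hyx, hTy⟩ := hs (cellIndex (m + 1) x)
  have hTxy : dist (T x) (T y) < ε / 2 :=
    hTδ ((dist_le_of_cellIndex_eq hyx.symm).trans_lt hm.1)
  have hTyσ : dist (T y) (cubeExchange σ x) ≤ ε / 2 := by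
    rw [dist_comm]
    refine (dist_le_dist_finProdFinEquiv_cellIndex (n := m + 1) (cubeExchange σ x) (T y)).trans ?_
    rw [hTy, cellIndex_cubeExchange]
    calc
      _ ≤ (2 + 2) / ((m + 1 : ℕ) : ℝ) := by gcongr; exact hσs _
      _ = 4 * (1 / (m + 1 : ℕ)) := by ring
      _ ≤ ε / 2 := by linarith [hm.2]
  linarith [dist_triangle (T x) (T y) (cubeExchange σ x)]

end CubeExchange

/-- Lax approximation by cyclic cube exchange transformations on the two-torus
`𝕋² = (ℝ/ℤ) × (ℝ/ℤ)`: every measure-preserving homeomorphism `T` of `𝕋²` is, within any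
`ε > 0` in the uniform metric, approximated by the cyclic cube exchange transformation
determined by a permutation `σ` of the `n²` squares `[k₁/n,(k₁+1)/n) × [k₂/n,(k₂+1)/n)`
which is a single cycle on the whole index set: for every point `x` lying in the square
indexed by `k`, the distance from `T(x)` to the rigid translate of `x` by
`((σ(k)₁ − k₁)/n, (σ(k)₂ − k₂)/n)` is at most `ε`. -/
theorem lax_approximation_cyclic_cube_exchange
    (T : (AddCircle (1 : ℝ) × AddCircle (1 : ℝ)) ≃ₜ (AddCircle (1 : ℝ) × AddCircle (1 : ℝ)))
    (hT : MeasurePreserving T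
      (volume : Measure (AddCircle (1 : ℝ) × AddCircle (1 : ℝ))) volume) :
    ∀ ε : ℝ, 0 < ε →
      ∃ n : ℕ, 0 < n ∧ ∃ σ : Equiv.Perm (Fin n × Fin n),
        (∀ k k' : Fin n × Fin n, ∃ m : ℕ, (σ ^ m) k = k') ∧
        ∀ (x : AddCircle (1 : ℝ) × AddCircle (1 : ℝ)) (k : Fin n × Fin n) (t₁ t₂ : ℝ),
          t₁ ∈ Set.Ico (((k.1 : ℕ) : ℝ) / n) ((((k.1 : ℕ) : ℝ) + 1) / n) →
          t₂ ∈ Set.Ico (((k.2 : ℕ) : ℝ) / n) ((((k.2 : ℕ) : ℝ) + 1) / n) →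
          x = ((t₁ : AddCircle (1 : ℝ)), (t₂ : AddCircle (1 : ℝ))) →
          dist (T x)
            (x + (((((((σ k).1 : ℕ) : ℝ) - ((k.1 : ℕ) : ℝ)) / n : ℝ) : AddCircle (1 : ℝ)),
                  ((((((σ k).2 : ℕ) : ℝ) - ((k.2 : ℕ) : ℝ)) / n : ℝ) : AddCircle (1 : ℝ))))
            ≤ ε := by
  intro ε hε
  obtain ⟨n, _, σ, hσ, hTσ⟩ := lax_approximation_cyclic_cube_exchange_general T.continuous hT hε
  exact ⟨n, NeZero.pos n, σ, fun k k' => (hσ k k').exists_nat_pow_eq,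
    fun x k t₁ t₂ h₁ h₂ hx => by rw [hx, ← cubeExchange_coe σ h₁ h₂]; exact hTσ _⟩
end

section
/- Cayley–Hamilton identity for periodic Jacobi operators: let p ≥ 3 and let a, b, c : ℤ → ℂ be p-periodic sequences (a(n+p) = a(n), b(n+p) = b(n), c(n+p) = c(n) for all n). Let L be the linear endomorphism of the space of all complex sequences (ℤ → ℂ) defined by (Lu)(n) = a(n)·u(n+1) + c(n−1)·u(n−1) + b(n)·u(n), let M = L_per(1) be the p×p matrix with diagonal entries b(i), superdiagonal entries a(i) (0 ≤ i ≤ p−2), subdiagonal entries c(i) (0 ≤ i ≤ p−2), corner entries M_{0,p−1} = c(p−1) and M_{p−1,0} = a(p−1), and let χ(z) = det(z·I − M) be its characteristic polynomial. Then, with A = ∏_{i=0}^{p−1} a(i) and C = ∏_{i=0}^{p−1} c(i), the operator obtained by evaluating χ at L satisfies, for every sequence u and every n ∈ ℤ: (χ(L)u)(n) = A·u(n+p) + C·u(n−p) − (A + C)·u(n). -/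
/-- The `p`-periodic Jacobi operator `(Lu)(n) = a(n)·u(n+1) + c(n−1)·u(n−1) + b(n)·u(n)`
as a linear endomorphism of the space of all complex bi-infinite sequences. -/
def jacobiEnd (a b c : ℤ → ℂ) : Module.End ℂ (ℤ → ℂ) where
  toFun u := fun n => a n * u (n + 1) + c (n - 1) * u (n - 1) + b n * u n
  map_add' u v := by
    funext n
    simp only [Pi.add_apply]
    ring
  map_smul' r u := by
    funext n
    simp only [Pi.smul_apply, smul_eq_mul, RingHom.id_apply]
    ring

/-- The period matrix `M = L_per(1)`: diagonal `b(i)`, superdiagonal `a(i)`, subdiagonal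
`c(i)`, corner entries `M_{0,p−1} = c(p−1)` and `M_{p−1,0} = a(p−1)`. -/
def periodMatrix (p : ℕ) (a b c : ℤ → ℂ) : Matrix (Fin p) (Fin p) ℂ :=
  Matrix.of fun i j =>
    if i = j then b ((i : ℕ) : ℤ)
    else if (j : ℕ) = (i : ℕ) + 1 then a ((i : ℕ) : ℤ)
    else if (i : ℕ) = (j : ℕ) + 1 then c ((j : ℕ) : ℤ)
    else if (i : ℕ) = 0 ∧ (j : ℕ) = p - 1 then c ((j : ℕ) : ℤ)
    else if (i : ℕ) = p - 1 ∧ (j : ℕ) = 0 then a ((i : ℕ) : ℤ)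
    else 0

/-!
For a formal Floquet multiplier `T`, the Floquet matrix is the period matrix with its corners
twisted by `T` and `T⁻¹`. Splitting a sequence into its residue classes modulo `p` turns matrices
of Laurent polynomials into operators, with `T` acting as the shift by one period, and the Floquet
matrix becomes `L`. In the characteristic polynomial, the corners `x`, `y` contribute a multiple of
`x`, one of `y`, and one of `x * y`. The first two have coefficients constant in `z` and the last
does not see the twist, so twisting the corners changes the characteristic polynomial only by a
constant in `z`. Cayley–Hamilton for the Floquet matrix then evaluates `χ` at it, hence at `L`.
-/

section CornerPerturbation

open Matrix

variable {R : Type*} [CommRing R]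

section Determinant

variable {ι : Type*} [Fintype ι] [DecidableEq ι]

theorem det_add_single (A : Matrix ι ι R) (i j : ι) (x : R) :
    (A + single i j x).det = A.det + x * A.adjugate j i := by
  have row_update : A + single i j x = A.updateRow i (A i + x • Pi.single j 1) := by
    ext k l
    rcases eq_or_ne k i with rfl | hk
    · simp [single_apply, Pi.single_apply, eq_comm]
    · simp [hk, single_apply_of_row_ne hk.symm]
  rw [row_update, det_updateRow_add, det_updateRow_smul, updateRow_eq_self, adjugate_apply]

theorem adjugate_add_single_of_ne (A : Matrix ι ι R) {i l : ι} (hil : i ≠ l) (j k : ι) (x : R) :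
    (A + single i j x).adjugate k l =
      A.adjugate k l + x * (A.updateRow l (Pi.single k 1)).adjugate j i := by
  have update_comm : (A + single i j x).updateRow l (Pi.single k 1) =
      A.updateRow l (Pi.single k 1) + single i j x := by
    ext r s
    rcases eq_or_ne r l with rfl | hr
    · simp [single_apply_of_row_ne hil]
    · simp [hr]
  rw [adjugate_apply, update_comm, det_add_single, adjugate_apply A]

theorem det_add_single_add_single_swap (A : Matrix ι ι R) {i j : ι} (hij : i ≠ j) (x y : R) :
    (A + single i j x + single j i y).det =
      A.det + x * A.adjugate j i + y * A.adjugate i j +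
        x * y * (A.updateRow j (Pi.single i 1)).adjugate j i := by
  rw [det_add_single, det_add_single, adjugate_add_single_of_ne A hij]
  ring

theorem charmatrix_add_single (A : Matrix ι ι R) (i j : ι) (x : R) :
    (A + single i j x).charmatrix = A.charmatrix + single i j (-Polynomial.C x) := by
  rw [charmatrix, charmatrix, map_add, RingHom.mapMatrix_apply _ (single i j x),
    map_single i j x Polynomial.C, ← single_neg]
  abel

theorem charpoly_add_single_add_single_swap (A : Matrix ι ι R) {i j : ι} (hij : i ≠ j)
    {x y x' y' : R} (hxy : x * y = x' * y') :
    (A + single i j x + single j i y).charpoly =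
      (A + single i j x' + single j i y').charpoly -
        (Polynomial.C (x - x') * A.charmatrix.adjugate j i +
          Polynomial.C (y - y') * A.charmatrix.adjugate i j) := by
  simp only [charpoly, charmatrix_add_single, det_add_single_add_single_swap _ hij, neg_mul_neg,
    ← Polynomial.C_mul, hxy, Polynomial.C_sub]
  ring

end Determinant

variable {n : ℕ}

theorem adjugate_last_zero_of_upperHessenberg (A : Matrix (Fin (n + 1)) (Fin (n + 1)) R)
    (hA : ∀ i j : Fin (n + 1), (j : ℕ) + 1 < i → A i j = 0) :
    A.adjugate (Fin.last n) 0 = (-1) ^ n * ∏ i : Fin n, A i.succ i.castSucc := by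
  have minor_triangular :
      (A.submatrix (Fin.succAbove 0) (Fin.last n).succAbove).IsUpperTriangular := by
    intro i j hij
    simpa using hA i.succ j.castSucc (by simpa using hij)
  rw [adjugate_fin_succ_eq_det_submatrix, det_of_isUpperTriangular minor_triangular]
  simp

theorem charmatrix_adjugate_last_zero_of_upperHessenberg
    (A : Matrix (Fin (n + 1)) (Fin (n + 1)) R)
    (hA : ∀ i j : Fin (n + 1), (j : ℕ) + 1 < i → A i j = 0) :
    A.charmatrix.adjugate (Fin.last n) 0 = Polynomial.C (∏ i : Fin n, A i.succ i.castSucc) := by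
  have charmatrix_upperHessenberg (i j : Fin (n + 1)) (hij : (j : ℕ) + 1 < i) :
      A.charmatrix i j = 0 := by
    rw [charmatrix_apply_ne _ _ _ (by rintro rfl; omega), hA i j hij, map_zero, neg_zero]
  have charmatrix_subdiagonal (i : Fin n) :
      A.charmatrix i.succ i.castSucc = -Polynomial.C (A i.succ i.castSucc) :=
    charmatrix_apply_ne _ _ _ Fin.castSucc_lt_succ.ne'
  simp only [adjugate_last_zero_of_upperHessenberg _ charmatrix_upperHessenberg,
    charmatrix_subdiagonal, Finset.prod_neg, Finset.card_univ, Fintype.card_fin, map_prod]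
  rw [← mul_assoc, ← mul_pow, neg_one_mul, neg_neg, one_pow, one_mul]

theorem charmatrix_adjugate_zero_last_of_lowerHessenberg
    (A : Matrix (Fin (n + 1)) (Fin (n + 1)) R)
    (hA : ∀ i j : Fin (n + 1), (i : ℕ) + 1 < j → A i j = 0) :
    A.charmatrix.adjugate 0 (Fin.last n) = Polynomial.C (∏ i : Fin n, A i.castSucc i.succ) := by
  rw [← transpose_apply A.charmatrix.adjugate, adjugate_transpose, ← charmatrix_transpose,
    charmatrix_adjugate_last_zero_of_upperHessenberg Aᵀ fun i j hij => hA j i hij]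
  rfl

theorem charpoly_add_corners_of_tridiagonal
    (A : Matrix (Fin (n + 1)) (Fin (n + 1)) R)
    (hlower : ∀ i j : Fin (n + 1), (i : ℕ) + 1 < j → A i j = 0)
    (hupper : ∀ i j : Fin (n + 1), (j : ℕ) + 1 < i → A i j = 0)
    {x y x' y' : R} (hxy : x * y = x' * y') :
    (A + single (Fin.last n) 0 x + single 0 (Fin.last n) y).charpoly =
      (A + single (Fin.last n) 0 x' + single 0 (Fin.last n) y').charpoly -
        Polynomial.C ((x - x') * ∏ i : Fin n, A i.castSucc i.succ +
          (y - y') * ∏ i : Fin n, A i.succ i.castSucc) := by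
  rcases n.eq_zero_or_pos with rfl | hn
  · simp only [charpoly, Nat.reduceAdd, det_fin_one, charmatrix_apply_eq, Matrix.add_apply,
      Fin.last_zero, single_apply_same, map_add, map_sub, Finset.univ_eq_empty, Finset.prod_empty,
      mul_one]
    ring
  have last_ne_zero : Fin.last n ≠ 0 := by simpa [Fin.ext_iff] using hn.ne'
  rw [charpoly_add_single_add_single_swap A last_ne_zero hxy,
    charmatrix_adjugate_zero_last_of_lowerHessenberg A hlower,
    charmatrix_adjugate_last_zero_of_upperHessenberg A hupper]
  simp only [map_add, map_mul]

end CornerPerturbation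

section BlockOperator

open LaurentPolynomial

theorem row_diagonal {ι R : Type*} [DecidableEq ι] [Zero R] (d : ι → R) (i : ι) :
    (Matrix.diagonal d).row i = Pi.single i (d i) := by
  ext1 j
  simp [Matrix.diagonal_apply, Pi.single_apply, eq_comm]

variable {R : Type*} [CommSemiring R]

/-- The shift `(τᵐu)(k) = u(k + m)` on bi-infinite sequences, as a representation of `ℤ`. -/
def seqShift : Multiplicative ℤ →* Module.End R (ℤ → R) where
  toFun m := LinearMap.funLeft R R (· + m.toAdd)
  map_one' := by ext; simp [LinearMap.funLeft_apply]
  map_mul' m m' := by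
    ext u k
    simp [LinearMap.funLeft_apply, add_assoc]

theorem seqShift_apply (m : ℤ) (u : ℤ → R) (k : ℤ) : seqShift (.ofAdd m) u k = u (k + m) := rfl

/-- The action of Laurent polynomials on bi-infinite sequences in which `T` acts as the shift. -/
noncomputable def laurentAction : R[T;T⁻¹] →ₐ[R] Module.End R (ℤ → R) :=
  AddMonoidAlgebra.lift R _ ℤ seqShift

theorem laurentAction_T_apply (m : ℤ) (u : ℤ → R) (k : ℤ) :
    laurentAction (T m) u k = u (k + m) := by
  rw [laurentAction, T, AddMonoidAlgebra.lift_single, one_smul]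
  rfl

theorem laurentAction_C_apply (r : R) (u : ℤ → R) : laurentAction (C r) u = r • u := by
  rw [C_eq_algebraMap, AlgHom.commutes, Module.algebraMap_end_apply]

variable (p : ℕ) [NeZero p]

/-- The splitting of a bi-infinite sequence `u` into its residue classes `k ↦ u(kp + i)`,
`0 ≤ i < p`. -/
def residueSplit : (ℤ → R) ≃ₗ[R] (Fin p → ℤ → R) :=
  LinearEquiv.funCongrLeft R R ((Equiv.prodComm (Fin p) ℤ).trans (Int.divModEquiv p).symm) ≪≫ₗ
    LinearEquiv.curry R R (Fin p) ℤ

theorem residueSplit_apply (u : ℤ → R) (i : Fin p) (k : ℤ) :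
    residueSplit p u i k = u (k * p + (i : ℕ)) := rfl

theorem residueSplit_end_ext {L L' : Module.End R (ℤ → R)}
    (h : ∀ u i k, residueSplit p (L u) i k = residueSplit p (L' u) i k) : L = L' :=
  LinearMap.ext fun u => (residueSplit p).injective <| funext fun i => funext fun k => h u i k

/-- The operator on bi-infinite sequences given by a matrix of Laurent polynomials acting on the
column of residue classes modulo `p`. -/
noncomputable def blockOperator :
    Matrix (Fin p) (Fin p) R[T;T⁻¹] →ₐ[R] Module.End R (ℤ → R) :=
  (((residueSplit p).symm.conjAlgEquiv R).toAlgHom.comp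
    (endVecAlgEquivMatrixEnd (Fin p) R R (ℤ → R)).symm.toAlgHom).comp
    laurentAction.mapMatrix

variable {p}

theorem residueSplit_blockOperator (M : Matrix (Fin p) (Fin p) R[T;T⁻¹]) (u : ℤ → R) (i : Fin p) :
    residueSplit p (blockOperator p M u) i = ∑ j, laurentAction (M i j) (residueSplit p u j) := by
  simp [blockOperator, LinearEquiv.conjAlgEquiv_apply]

theorem residueSplit_blockOperator_of_row_eq_single {M : Matrix (Fin p) (Fin p) R[T;T⁻¹]}
    {i j : Fin p} {f : R[T;T⁻¹]} (hM : M.row i = Pi.single j f) (u : ℤ → R) :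
    residueSplit p (blockOperator p M u) i = laurentAction f (residueSplit p u j) := by
  have entries (l : Fin p) : M i l = if l = j then f else 0 := by
    rw [← M.row_apply, hM, Pi.single_apply]
  simp only [residueSplit_blockOperator, entries]
  rw [Finset.sum_eq_single_of_mem j (Finset.mem_univ j) fun l _ hl => by simp [hl], if_pos rfl]

theorem blockOperator_algebraMap_T (m : ℤ) :
    blockOperator p (algebraMap R[T;T⁻¹] _ (T m)) =
      (seqShift (.ofAdd (m * p)) : Module.End R (ℤ → R)) := by
  refine residueSplit_end_ext p fun u i k => ?_
  rw [Matrix.algebraMap_eq_diagonal, residueSplit_blockOperator_of_row_eq_single (row_diagonal _ i),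
    Pi.algebraMap_apply, Algebra.algebraMap_self_apply, laurentAction_T_apply]
  simp only [residueSplit_apply, seqShift_apply]
  congr 1
  ring

theorem blockOperator_algebraMap_C (r : R) :
    blockOperator p (algebraMap R[T;T⁻¹] _ (C r)) = algebraMap R (Module.End R (ℤ → R)) r := by
  rw [C_eq_algebraMap, ← IsScalarTower.algebraMap_apply, AlgHom.commutes]

theorem blockOperator_diagonal_of_periodic {d : ℤ → R} (hd : Function.Periodic d (p : ℤ)) :
    blockOperator p (Matrix.diagonal fun i : Fin p => C (d (i : ℕ))) = LinearMap.mulLeft R d := by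
  refine residueSplit_end_ext p fun u i k => ?_
  have d_residue : d (k * p + (i : ℕ)) = d (i : ℕ) := by
    rw [add_comm]
    exact hd.int_mul k _
  rw [residueSplit_blockOperator_of_row_eq_single (row_diagonal _ i), laurentAction_C_apply,
    Pi.smul_apply, smul_eq_mul, residueSplit_apply, residueSplit_apply, LinearMap.mulLeft_apply,
    Pi.mul_apply, d_residue]

variable (R) in
/-- The Floquet matrix of the shift by one. -/
noncomputable def floquetShift (n : ℕ) : Matrix (Fin (n + 1)) (Fin (n + 1)) R[T;T⁻¹] :=
  Matrix.of (fun i j : Fin (n + 1) => if (j : ℕ) = i + 1 then 1 else 0) +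
    Matrix.single (Fin.last n) 0 (T 1)

variable (R) in
/-- The Floquet matrix of the shift by minus one. -/
noncomputable def floquetShiftInv (n : ℕ) : Matrix (Fin (n + 1)) (Fin (n + 1)) R[T;T⁻¹] :=
  Matrix.of (fun i j : Fin (n + 1) => if (i : ℕ) = j + 1 then 1 else 0) +
    Matrix.single 0 (Fin.last n) (T (-1))

theorem blockOperator_floquetShift (n : ℕ) :
    blockOperator (n + 1) (floquetShift R n) = seqShift (.ofAdd 1) := by
  have row_last : (floquetShift R n).row (Fin.last n) = Pi.single 0 (T 1 : R[T;T⁻¹]) := by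
    ext1 j
    have : (j : ℕ) ≠ n + 1 := by omega
    simp [floquetShift, Matrix.single_apply, Pi.single_apply, eq_comm, this]
  have row_castSucc (i : Fin n) : (floquetShift R n).row i.castSucc = Pi.single i.succ 1 := by
    ext1 j
    simp [floquetShift, Pi.single_apply, Fin.ext_iff, i.isLt.ne']
  refine residueSplit_end_ext (n + 1) fun u i k => ?_
  induction i using Fin.lastCases with
  | last =>
    rw [residueSplit_blockOperator_of_row_eq_single row_last, laurentAction_T_apply]
    simp only [residueSplit_apply, seqShift_apply, Fin.val_zero, Fin.val_last]
    congr 1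
    push_cast
    ring
  | cast i =>
    rw [residueSplit_blockOperator_of_row_eq_single (row_castSucc i), map_one,
      Module.End.one_apply]
    simp only [residueSplit_apply, seqShift_apply, Fin.val_succ, Fin.val_castSucc]
    congr 1
    push_cast
    ring

theorem blockOperator_floquetShiftInv (n : ℕ) :
    blockOperator (n + 1) (floquetShiftInv R n) = seqShift (.ofAdd (-1)) := by
  have row_zero : (floquetShiftInv R n).row 0 = Pi.single (Fin.last n) (T (-1)) := by
    ext1 j
    simp [floquetShiftInv, Matrix.single_apply, Pi.single_apply, eq_comm]
  have row_succ (i : Fin n) : (floquetShiftInv R n).row i.succ = Pi.single i.castSucc 1 := by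
    ext1 j
    simp [floquetShiftInv, Pi.single_apply, Fin.ext_iff, eq_comm]
  refine residueSplit_end_ext (n + 1) fun u i k => ?_
  induction i using Fin.cases with
  | zero =>
    rw [residueSplit_blockOperator_of_row_eq_single row_zero, laurentAction_T_apply]
    simp only [residueSplit_apply, seqShift_apply, Fin.val_zero, Fin.val_last]
    congr 1
    push_cast
    ring
  | succ i =>
    rw [residueSplit_blockOperator_of_row_eq_single (row_succ i), map_one,
      Module.End.one_apply]
    simp only [residueSplit_apply, seqShift_apply, Fin.val_succ, Fin.val_castSucc]
    congr 1
    push_cast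
    ring

end BlockOperator

section Floquet

open LaurentPolynomial

variable {R : Type*} [CommRing R] (n : ℕ) (a b c : ℤ → R)

/-- The Jacobi operator `a τ + τ⁻¹ c + b` with coefficients in a commutative ring, where `τ` is the
shift. -/
def jacobiOperator : Module.End R (ℤ → R) :=
  LinearMap.mulLeft R a * seqShift (.ofAdd 1) + seqShift (.ofAdd (-1)) * LinearMap.mulLeft R c +
    LinearMap.mulLeft R b

/-- The tridiagonal part of the period matrix of size `n + 1`, without its two corners. -/
def jacobiTruncation : Matrix (Fin (n + 1)) (Fin (n + 1)) R :=
  Matrix.of fun i j =>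
    if i = j then b (i : ℕ)
    else if (j : ℕ) = i + 1 then a (i : ℕ)
    else if (i : ℕ) = j + 1 then c (j : ℕ)
    else 0

/-- The period matrix of size `n + 1`. The corners are added to the tridiagonal part, so that for
`n ≤ 1`, where the corner positions lie on the three diagonals, it is still `L_per(1)`. -/
def cyclicJacobiMatrix : Matrix (Fin (n + 1)) (Fin (n + 1)) R :=
  jacobiTruncation n a b c + Matrix.single (Fin.last n) 0 (a n) + Matrix.single 0 (Fin.last n) (c n)

/-- The Floquet matrix `L_per(T)` of period `n + 1`, with the Floquet multiplier taken to be the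
variable `T` of the ring of Laurent polynomials. -/
noncomputable def floquetMatrix : Matrix (Fin (n + 1)) (Fin (n + 1)) R[T;T⁻¹] :=
  (jacobiTruncation n a b c).map C + Matrix.single (Fin.last n) 0 (C (a n) * T 1) +
    Matrix.single 0 (Fin.last n) (C (c n) * T (-1))

theorem jacobiTruncation_castSucc_succ (i : Fin n) :
    jacobiTruncation n a b c i.castSucc i.succ = a (i : ℕ) := by
  simp [jacobiTruncation, Fin.castSucc_lt_succ.ne]

theorem jacobiTruncation_succ_castSucc (i : Fin n) :
    jacobiTruncation n a b c i.succ i.castSucc = c (i : ℕ) := by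
  simp [jacobiTruncation, Fin.castSucc_lt_succ.ne', show (i : ℕ) ≠ i + 1 + 1 by omega]

variable {n} in
theorem jacobiTruncation_eq_zero {i j : Fin (n + 1)}
    (hij : (i : ℕ) + 1 < j ∨ (j : ℕ) + 1 < i) : jacobiTruncation n a b c i j = 0 := by
  simp only [jacobiTruncation, Matrix.of_apply, Fin.ext_iff]
  rw [if_neg (by omega), if_neg (by omega), if_neg (by omega)]

theorem floquetMatrix_eq_diagonal_mul_shift :
    floquetMatrix n a b c =
      Matrix.diagonal (fun i : Fin (n + 1) => C (a (i : ℕ))) * floquetShift R n +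
        floquetShiftInv R n * Matrix.diagonal (fun i : Fin (n + 1) => C (c (i : ℕ))) +
        Matrix.diagonal (fun i : Fin (n + 1) => C (b (i : ℕ))) := by
  ext1 i j
  simp only [floquetMatrix, floquetShift, floquetShiftInv, jacobiTruncation, Matrix.add_apply,
    Matrix.map_apply, Matrix.of_apply, Matrix.diagonal_mul, Matrix.mul_diagonal,
    Matrix.diagonal_apply, Matrix.single_apply, Fin.ext_iff, Fin.val_last, Fin.val_zero]
  grind

variable {n a b c} in
theorem blockOperator_floquetMatrix (ha : Function.Periodic a (n + 1 : ℕ))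
    (hb : Function.Periodic b (n + 1 : ℕ)) (hc : Function.Periodic c (n + 1 : ℕ)) :
    blockOperator (n + 1) (floquetMatrix n a b c) = jacobiOperator a b c := by
  simp only [floquetMatrix_eq_diagonal_mul_shift, jacobiOperator, map_add, map_mul,
    blockOperator_diagonal_of_periodic ha, blockOperator_diagonal_of_periodic hb,
    blockOperator_diagonal_of_periodic hc, blockOperator_floquetShift,
    blockOperator_floquetShiftInv]

theorem charpoly_floquetMatrix :
    (floquetMatrix n a b c).charpoly =
      (cyclicJacobiMatrix n a b c).charpoly.map C -
        Polynomial.C (C (∏ i : Fin (n + 1), a (i : ℕ)) * (T 1 - 1) +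
          C (∏ i : Fin (n + 1), c (i : ℕ)) * (T (-1) - 1)) := by
  have corners_mul : (C (a n) * T 1 * (C (c n) * T (-1)) : R[T;T⁻¹]) = C (a n) * C (c n) := by
    rw [mul_mul_mul_comm, ← T_add, add_neg_cancel, T_zero, mul_one]
  have map_eq_zero {i j : Fin (n + 1)} (hij : (i : ℕ) + 1 < j ∨ (j : ℕ) + 1 < i) :
      (jacobiTruncation n a b c).map (C : R →+* R[T;T⁻¹]) i j = 0 := by
    rw [Matrix.map_apply, jacobiTruncation_eq_zero a b c hij, map_zero]
  rw [floquetMatrix,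
    charpoly_add_corners_of_tridiagonal _ (fun _ _ h => map_eq_zero (.inl h))
      (fun _ _ h => map_eq_zero (.inr h)) corners_mul,
    ← Matrix.charpoly_map, cyclicJacobiMatrix, Matrix.map_add _ (map_add C),
    Matrix.map_add _ (map_add C), Matrix.map_single, Matrix.map_single]
  congr 2
  simp only [Matrix.map_apply, jacobiTruncation_castSucc_succ, jacobiTruncation_succ_castSucc,
    Fin.prod_univ_castSucc, Fin.val_castSucc, Fin.val_last, map_mul, map_prod]
  ring

theorem aeval_floquetMatrix_charpoly_cyclicJacobiMatrix :
    Polynomial.aeval (floquetMatrix n a b c) (cyclicJacobiMatrix n a b c).charpoly =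
      algebraMap R[T;T⁻¹] _ (C (∏ i : Fin (n + 1), a (i : ℕ)) * (T 1 - 1) +
        C (∏ i : Fin (n + 1), c (i : ℕ)) * (T (-1) - 1)) := by
  have cayley_hamilton := (floquetMatrix n a b c).aeval_self_charpoly
  rw [charpoly_floquetMatrix, map_sub, Polynomial.aeval_C, sub_eq_zero] at cayley_hamilton
  rw [← cayley_hamilton]
  exact (Polynomial.aeval_map_algebraMap ..).symm

variable {n a b c} in
theorem charpoly_eval_jacobi_general (ha : Function.Periodic a (n + 1 : ℕ))
    (hb : Function.Periodic b (n + 1 : ℕ)) (hc : Function.Periodic c (n + 1 : ℕ))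
    (u : ℤ → R) (k : ℤ) :
    Polynomial.aeval (jacobiOperator a b c) (cyclicJacobiMatrix n a b c).charpoly u k =
      (∏ i : Fin (n + 1), a (i : ℕ)) * u (k + (n + 1 : ℕ)) +
        (∏ i : Fin (n + 1), c (i : ℕ)) * u (k - (n + 1 : ℕ)) -
        ((∏ i : Fin (n + 1), a (i : ℕ)) + ∏ i : Fin (n + 1), c (i : ℕ)) * u k := by
  rw [← blockOperator_floquetMatrix ha hb hc, Polynomial.aeval_algHom_apply,
    aeval_floquetMatrix_charpoly_cyclicJacobiMatrix]
  simp only [map_add, map_mul, map_sub, map_one, blockOperator_algebraMap_T,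
    blockOperator_algebraMap_C, LinearMap.add_apply, LinearMap.sub_apply, Module.End.mul_apply,
    Module.End.one_apply, Module.algebraMap_end_apply, Pi.add_apply, Pi.sub_apply, Pi.smul_apply,
    smul_eq_mul, seqShift_apply, one_mul, neg_one_mul, ← sub_eq_add_neg]
  ring

theorem jacobiEnd_eq_jacobiOperator (a b c : ℤ → ℂ) : jacobiEnd a b c = jacobiOperator a b c :=
  rfl

theorem periodMatrix_eq_cyclicJacobiMatrix {n : ℕ} (hn : 2 ≤ n) (a b c : ℤ → ℂ) :
    periodMatrix (n + 1) a b c = cyclicJacobiMatrix n a b c := by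
  ext1 i j
  simp only [periodMatrix, cyclicJacobiMatrix, jacobiTruncation, Matrix.of_apply, Matrix.add_apply,
    Matrix.single_apply, Fin.ext_iff, Fin.val_last, Fin.val_zero, Nat.add_sub_cancel]
  grind

end Floquet

/-- Cayley–Hamilton identity for periodic Jacobi operators: for `p ≥ 3` and `p`-periodic
sequences `a, b, c`, evaluating the characteristic polynomial `χ` of the period matrix at
the Jacobi operator `L` yields `χ(L) = A·τ^p + C·τ^{−p} − (A + C)`, where `A = ∏ a(i)`,
`C = ∏ c(i)` and `τ` is the shift. -/
theorem charpoly_eval_jacobi (p : ℕ) (hp : 3 ≤ p) (a b c : ℤ → ℂ)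
    (hpa : ∀ n : ℤ, a (n + p) = a n) (hpb : ∀ n : ℤ, b (n + p) = b n)
    (hpc : ∀ n : ℤ, c (n + p) = c n) :
    ∀ (u : ℤ → ℂ) (n : ℤ),
      (Polynomial.aeval (jacobiEnd a b c) (periodMatrix p a b c).charpoly) u n
        = (∏ i : Fin p, a ((i : ℕ) : ℤ)) * u (n + p)
          + (∏ i : Fin p, c ((i : ℕ) : ℤ)) * u (n - p)
          - ((∏ i : Fin p, a ((i : ℕ) : ℤ)) + (∏ i : Fin p, c ((i : ℕ) : ℤ))) * u n := by
  obtain ⟨n, rfl⟩ : ∃ n, p = n + 1 := ⟨p - 1, by omega⟩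
  rw [jacobiEnd_eq_jacobiOperator, periodMatrix_eq_cyclicJacobiMatrix (by omega)]
  exact charpoly_eval_jacobi_general hpa hpb hpc
end
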